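/- For integers n and m with 2 ≤ m ≤ n − 1, Σ_{i=2}^{m} X_{C_i} · X_{P_{n−i}} = Σ_{I ⊨ n} σ_{Ī}^−(m) · w_I · e_I. -/

import Mathlib

/-!
Let `F(z) = Σ_{k ≥ 1} (k - 1) e_k z^k` and `E(z) = Σ_k e_k z^k`, so that `1 - F = E - z E'`. The proof
compares generating functions in `z`.

*Graph side.* Colorings of paths and cycles are words without equal adjacent letters. In finitely
many variables, a transfer recursion on the first letter gives `(1 - F) Σ_n X_{P_n} z^n = E` and
`(1 - F) Σ_{n ≥ 2} X_{C_n} z^n = z² E'' = z F'` (`path_cycle_series`). The homomorphisms `truncHom N`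
killing the variables `x_i` with `i ≥ N` are jointly injective and send `csf` and `esymm` to their
finite versions, so both equations hold for symmetric functions (`path_series`, `cycle_series`).

*Composition side.* Put `φ(I) = ∏ (i_j - 1) e_{i_j}`. Splitting off the first part gives
`Φ := Σ_I φ(I) z^|I| = 1 / (1 - F)`. For `S_m := Σ_I σ_Ī^-(m) φ(I) z^|I|`, one finds that `(1 - F) S_m`
is the truncation `C_{≤ m}` of the cycle series at degree `m` (`serF_mul_serSigma`). For `n > m` the first
part `i_1` of `I` is the last part of `Ī` and does not matter for `σ_Ī^-(m)`, hence the right-hand side is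
the coefficient of `z^n` in `z E' S_m = (E - (1 - F)) Φ C_{≤ m} = (P - 1) C_{≤ m}`, where `P` is the path
series. As `C_{≤ m}` has no term of degree `n`, this is the coefficient of `z^n` in `P C_{≤ m}`.
-/

open Finset

/-- Symmetric functions in countably many variables `x_0, x_1, x_2, …`, realized inside
the ring of formal multivariate power series over `ℚ`. -/
abbrev SymF : Type := MvPowerSeries ℕ ℚ

open Classical in
/-- The elementary symmetric function `e_k`: the sum of all squarefree monomials of
degree `k` (so `e_0 = 1`). -/
noncomputable def esymm (k : ℕ) : SymF :=
  fun d : ℕ →₀ ℕ =>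
    if (d.sum fun _ e => e) = k ∧ ∀ i, d i ≤ 1 then (1 : ℚ) else 0

/-- `e_I = e_{i_1} ⋯ e_{i_s}` for a list `I = [i_1, …, i_s]`. -/
noncomputable def esymmProd (I : List ℕ) : SymF := (I.map esymm).prod

open Classical in
/-- The chromatic symmetric function `X_G = Σ_κ ∏_v x_{κ v}`, summed over proper colorings
`κ : V → ℕ`: the coefficient of the monomial with exponent vector `d` is the number of
proper colorings all of whose color fibres have the sizes recorded by `d`. -/
noncomputable def csf {V : Type} [Finite V] (G : SimpleGraph V) : SymF :=
  fun d : ℕ →₀ ℕ =>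
    (({κ : V → ℕ | (∀ v w, G.Adj v w → κ v ≠ κ w) ∧
        ∀ i : ℕ, {v | κ v = i}.ncard = d i}).ncard : ℚ)

/-- `w_I = i_1 ∏_{j ≥ 2} (i_j - 1)`, with `w_ε = 1`. -/
def wC : List ℕ → ℕ
  | [] => 1
  | h :: t => h * (t.map (· - 1)).prod

/-- The path `P_n` on vertices `0, 1, …, n-1`. -/
def pathG (n : ℕ) : SimpleGraph (Fin n) :=
  SimpleGraph.fromRel (fun i j => (i : ℕ) + 1 = (j : ℕ))

/-- The cycle `C_n` on vertices `0, 1, …, n-1` (for `n = 2` this is `K_2`). -/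
def cycleG (n : ℕ) : SimpleGraph (Fin n) :=
  SimpleGraph.fromRel (fun i j =>
    (i : ℕ) + 1 = (j : ℕ) ∨ ((i : ℕ) = 0 ∧ (j : ℕ) = n - 1))

/-- `σ_I^-(a)`: the largest prefix sum of `I` that is at most `a`. -/
noncomputable def sigmaMinus (I : List ℕ) (a : ℕ) : ℕ :=
  sSup {m | (∃ k ≤ I.length, (I.take k).sum = m) ∧ m ≤ a}

/-- `Θ_I^-(a) = a - σ_I^-(a)`. -/
noncomputable def thetaMinus (I : List ℕ) (a : ℕ) : ℕ := a - sigmaMinus I a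

/-! ### Sums over compositions and prefix sums -/

/-- The finite set of compositions of `n`, as lists of positive integers. -/
noncomputable def compLists (n : ℕ) : Finset (List ℕ) :=
  Finset.univ.image (fun I : Composition n => I.blocks)

lemma mem_compLists {n : ℕ} {L : List ℕ} :
    L ∈ compLists n ↔ (∀ i ∈ L, 0 < i) ∧ L.sum = n := by
  simp only [compLists, Finset.mem_image, Finset.mem_univ, true_and]
  constructor
  · rintro ⟨I, rfl⟩
    exact ⟨fun i hi => I.blocks_pos hi, I.blocks_sum⟩
  · rintro ⟨h1, h2⟩
    exact ⟨⟨L, fun hi => h1 _ hi, h2⟩, rfl⟩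

lemma sum_composition_eq {R : Type*} [AddCommMonoid R] (f : List ℕ → R) (n : ℕ) :
    ∑ I : Composition n, f I.blocks = ∑ L ∈ compLists n, f L := by
  rw [compLists, Finset.sum_image]
  intro I _ J _ h
  exact Composition.ext h

lemma compLists_zero : compLists 0 = {[]} := by
  ext L
  rw [mem_compLists, Finset.mem_singleton]
  constructor
  · rintro ⟨h1, h2⟩
    cases L with
    | nil => rfl
    | cons a t =>
      have := h1 a (by simp)
      simp at h2
      omega
  · rintro rfl
    simp

/-- Recursion for sums over compositions, by splitting off the first part. -/
lemma sum_compLists_succ {R : Type*} [AddCommMonoid R] (f : List ℕ → R) (n : ℕ) :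
    ∑ L ∈ compLists (n + 1), f L =
      ∑ ij ∈ antidiagonal n, ∑ L ∈ compLists ij.2, f ((ij.1 + 1) :: L) := by
  rw [Finset.sum_sigma']
  symm
  refine Finset.sum_bij' (fun s _ => (s.1.1 + 1) :: s.2)
    (fun L _ => ⟨(L.headI - 1, L.tail.sum), L.tail⟩) ?_ ?_ ?_ ?_ ?_
  · rintro ⟨⟨i, j⟩, L⟩ h
    simp only [Finset.mem_sigma, HasAntidiagonal.mem_antidiagonal, mem_compLists] at h ⊢
    obtain ⟨h1, h2, h3⟩ := h
    refine ⟨?_, by simp; omega⟩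
    intro k hk
    rcases List.mem_cons.1 hk with rfl | hk
    · omega
    · exact h2 k hk
  · intro L h
    rw [mem_compLists] at h
    cases L with
    | nil => simp at h
    | cons a t =>
      have ha := h.1 a (by simp)
      have hs := h.2
      simp only [List.sum_cons] at hs
      simp only [Finset.mem_sigma, HasAntidiagonal.mem_antidiagonal, mem_compLists, List.headI_cons,
        List.tail_cons, and_true]
      exact ⟨by omega, fun i hi => h.1 i (by simp [hi])⟩
  · rintro ⟨⟨i, j⟩, L⟩ h
    simp only [Finset.mem_sigma, HasAntidiagonal.mem_antidiagonal, mem_compLists] at h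
    obtain ⟨h1, h2, rfl⟩ := h
    simp
  · intro L h
    rw [mem_compLists] at h
    cases L with
    | nil => simp at h
    | cons a t =>
      have ha := h.1 a (by simp)
      simp
      omega
  · intros; rfl

lemma sigmaMinus_eq_sum {L : List ℕ} {m : ℕ} (h : L.sum ≤ m) : sigmaMinus L m = L.sum := by
  apply IsGreatest.csSup_eq
  refine ⟨⟨⟨L.length, le_rfl, by simp⟩, h⟩, ?_⟩
  rintro x ⟨⟨k, hk, rfl⟩, -⟩
  exact (List.take_sublist k L).sum_le_sum (by simp)

lemma sigmaMinus_append {L : List ℕ} {k m : ℕ} (h : m < L.sum + k) :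
    sigmaMinus (L ++ [k]) m = sigmaMinus L m := by
  unfold sigmaMinus
  congr 1
  ext x
  simp only [Set.mem_ofPred_eq, and_congr_left_iff]
  intro hx
  constructor
  · rintro ⟨j, hj, rfl⟩
    rcases Nat.lt_or_ge L.length j with h1 | h1
    · have : j = (L ++ [k]).length := by simp at hj ⊢; omega
      rw [this, List.take_length] at hx
      simp at hx
      omega
    · exact ⟨j, h1, by rw [List.take_append_of_le_length h1]⟩
  · rintro ⟨j, hj, rfl⟩
    exact ⟨j, by simp; omega, by rw [List.take_append_of_le_length hj]⟩

/-! ### The composition side as a generating function -/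

section Algebra
open PowerSeries
variable {R : Type*} [CommRing R] (e : ℕ → R)

/-- The series `F(z) = Σ_k (k - 1) e_k z^k` over `k ≥ 1`; truncated subtraction makes the term
`k = 0` vanish. -/
noncomputable def serF : PowerSeries R := PowerSeries.mk fun k => ((k - 1 : ℕ) : R) * e k

/-- The weight `∏ (i_j - 1) e_{i_j}` of a composition. -/
def phi (L : List ℕ) : R := (L.map fun i => ((i - 1 : ℕ) : R) * e i).prod

/-- The series `Σ_I φ(I) z^|I|` over all compositions `I`, with `φ = phi`; it is the inverse of
`1 - F`. -/
noncomputable def serPhi : PowerSeries R := PowerSeries.mk fun n => ∑ L ∈ compLists n, phi e L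

/-- The series `Σ_I σ_Ī^-(m) φ(I) z^|I|` over all compositions `I`, with `φ = phi`. -/
noncomputable def serSigma (m : ℕ) : PowerSeries R :=
  PowerSeries.mk fun n => ∑ L ∈ compLists n, (sigmaMinus L.reverse m : R) * phi e L

lemma phi_cons (i : ℕ) (L : List ℕ) : phi e ((i + 1) :: L) = (i : R) * e (i + 1) * phi e L := by
  simp [phi]

lemma coeff_serF_mul (G : PowerSeries R) (n : ℕ) :
    coeff (n + 1) (serF e * G) =
      ∑ ij ∈ antidiagonal n, (ij.1 : R) * e (ij.1 + 1) * coeff ij.2 G := by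
  rw [PowerSeries.coeff_mul, Finset.Nat.sum_antidiagonal_succ]
  simp [serF]

lemma serF_mul_serPhi : (1 - serF e) * serPhi e = 1 := by
  rw [sub_mul, one_mul, sub_eq_iff_eq_add]
  ext n
  cases n with
  | zero => simp [serPhi, serF, compLists_zero, phi]
  | succ n =>
    rw [map_add, coeff_serF_mul]
    simp only [serPhi, coeff_mk, sum_compLists_succ, phi_cons, Finset.mul_sum]
    simp [PowerSeries.coeff_one]

/-- The cycle series is `z F' / (1 - F)`, and so is `(1 - F) z Φ'` for `Φ = 1 / (1 - F)`. Up to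
degree `m` the series `serSigma` agrees with `z Φ'`, since `σ_Ī^-(m) = |I|` there; in degrees
above `m` the last part of `Ī` does not affect `σ_Ī^-(m)`, and multiplication by `1 - F` gives `0`. -/
lemma serF_mul_serSigma (m : ℕ) (c : ℕ → R)
    (hc : (1 - serF e) * PowerSeries.mk c = PowerSeries.mk fun k => (k : R) * ((k - 1 : ℕ) : R) * e k) :
    (1 - serF e) * serSigma e m = PowerSeries.mk fun j => if j ≤ m then c j else 0 := by
  have hFP := serF_mul_serPhi e
  have hder : (1 - serF e) * (X * d⁄dX R (serPhi e)) = PowerSeries.mk c := by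
    have h1 : PowerSeries.mk c = serPhi e * (X * d⁄dX R (serF e)) := by
      have h2 : X * d⁄dX R (serF e) = PowerSeries.mk fun k => (k : R) * ((k - 1 : ℕ) : R) * e k := by
        ext n
        cases n with
        | zero => simp
        | succ n =>
          rw [PowerSeries.coeff_succ_X_mul, PowerSeries.coeff_derivative]
          simp [serF]
          ring
      rw [h2, ← hc]
      linear_combination (-(PowerSeries.mk c)) * hFP
    have h3 := congrArg (d⁄dX R) hFP
    rw [Derivation.leibniz, map_sub, PowerSeries.derivative_one] at h3
    simp only [smul_eq_mul] at h3
    rw [h1]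
    linear_combination X * h3
  ext n
  cases n with
  | zero =>
    have h0 := congrArg (coeff 0) hder
    simp [serF] at h0
    have hσ : sigmaMinus [] m = 0 := sigmaMinus_eq_sum (by simp)
    simp [serF, serSigma, compLists_zero, hσ, ← h0]
  | succ n =>
    rw [coeff_mk]
    split_ifs with h
    · have hS : ∀ j ≤ m, coeff j (serSigma e m) = coeff j (X * d⁄dX R (serPhi e)) := by
        intro j hj
        have : coeff j (X * d⁄dX R (serPhi e)) = j * coeff j (serPhi e) := by
          cases j with
          | zero => simp
          | succ j =>
            rw [PowerSeries.coeff_succ_X_mul, PowerSeries.coeff_derivative]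
            push_cast; ring
        rw [this]
        simp only [serSigma, serPhi, coeff_mk, Finset.mul_sum]
        refine Finset.sum_congr rfl fun L hL => ?_
        have hs := (mem_compLists.1 hL).2
        rw [sigmaMinus_eq_sum (by simpa [hs] using hj), List.sum_reverse, hs]
      have := congrArg (coeff (n + 1)) hder
      rw [coeff_mk] at this
      rw [← this, sub_mul, sub_mul, one_mul, one_mul, map_sub, map_sub, coeff_serF_mul,
        coeff_serF_mul, hS _ h]
      congr 1
      refine Finset.sum_congr rfl fun ij hij => ?_
      have := HasAntidiagonal.mem_antidiagonal.1 hij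
      rw [hS _ (by omega)]
    · rw [sub_mul, one_mul, map_sub, coeff_serF_mul, sub_eq_zero]
      simp only [serSigma, coeff_mk, sum_compLists_succ, phi_cons, Finset.mul_sum]
      refine Finset.sum_congr rfl fun ij hij => Finset.sum_congr rfl fun L hL => ?_
      have h1 := HasAntidiagonal.mem_antidiagonal.1 hij
      have hs := (mem_compLists.1 hL).2
      rw [List.reverse_cons, sigmaMinus_append (by rw [List.sum_reverse, hs]; omega)]
      ring

lemma wC_cons_mul (i : ℕ) (L : List ℕ) :
    (wC ((i + 1) :: L) : R) * (((i + 1) :: L).map e).prod =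
      ((i + 1 : ℕ) : R) * e (i + 1) * phi e L := by
  have h : phi e L = (((L.map (· - 1)).prod : ℕ) : R) * (L.map e).prod := by
    induction L with
    | nil => simp [phi]
    | cons a t ih =>
      simp only [phi, List.map_cons, List.prod_cons] at ih ⊢
      rw [ih]; push_cast; ring
  rw [h]
  simp only [wC, List.map_cons, List.prod_cons]
  push_cast
  ring

/-- The identity of the theorem, for any sequences `p` and `c` whose generating series satisfy the
equations of the path and cycle series. -/
lemma sum_sigma_wC (p c : ℕ → R) (he : e 0 = 1)
    (hp : (1 - serF e) * PowerSeries.mk p = PowerSeries.mk e)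
    (hc : (1 - serF e) * PowerSeries.mk c = PowerSeries.mk fun k => (k : R) * ((k - 1 : ℕ) : R) * e k)
    {n m : ℕ} (hmn : m < n) :
    ∑ I : Composition n, ((sigmaMinus I.blocks.reverse m * wC I.blocks : ℕ) : R) *
        (I.blocks.map e).prod = ∑ j ∈ Finset.range (m + 1), c j * p (n - j) := by
  rw [sum_composition_eq (fun L => ((sigmaMinus L.reverse m * wC L : ℕ) : R) * (L.map e).prod)]
  have hFP := serF_mul_serPhi e
  have hS := serF_mul_serSigma e m c hc
  set Ct : PowerSeries R := PowerSeries.mk fun j => if j ≤ m then c j else 0 with hCt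
  have hE : PowerSeries.mk (fun k => (k : R) * e k) = PowerSeries.mk e - (1 - serF e) := by
    ext k
    cases k with
    | zero => simp [serF, he]
    | succ k => simp [serF, PowerSeries.coeff_one]; ring
  have hprod : PowerSeries.mk (fun k => (k : R) * e k) * serSigma e m = Ct * PowerSeries.mk p - Ct := by
    rw [hE, ← hS, ← hp]; ring
  obtain ⟨n, rfl⟩ : ∃ k, n = k + 1 := ⟨n - 1, by omega⟩
  have h1 := congrArg (coeff (n + 1)) hprod
  rw [PowerSeries.coeff_mul, Finset.Nat.sum_antidiagonal_succ, map_sub, PowerSeries.coeff_mul] at h1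
  simp only [hCt, coeff_mk, Nat.cast_zero, zero_mul, zero_add, if_neg (not_le.2 hmn),
    sub_zero, serSigma] at h1
  rw [sum_compLists_succ]
  have hr : ∑ j ∈ Finset.range (m + 1), c j * p (n + 1 - j) =
      ∑ j ∈ Finset.range (n + 1).succ, (if j ≤ m then c j else 0) * p (n + 1 - j) := by
    refine Finset.sum_subset_zero_on_sdiff (Finset.range_mono (by omega)) ?_ ?_
    · intro j hj
      simp only [Finset.mem_sdiff, Finset.mem_range] at hj
      rw [if_neg (by omega), zero_mul]
    · intro j hj
      rw [if_pos (by simp at hj; omega)]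
  rw [hr, ← Finset.Nat.sum_antidiagonal_eq_sum_range_succ_mk
    (fun ij : ℕ × ℕ => (if ij.1 ≤ m then c ij.1 else 0) * p ij.2), ← h1]
  refine Finset.sum_congr rfl fun ij hij => ?_
  rw [Finset.mul_sum]
  refine Finset.sum_congr rfl fun L hL => ?_
  have h1 := HasAntidiagonal.mem_antidiagonal.1 hij
  have hs := (mem_compLists.1 hL).2
  rw [List.reverse_cons, sigmaMinus_append (by rw [List.sum_reverse, hs]; omega), Nat.cast_mul,
    mul_assoc, wC_cons_mul]
  ring

end Algebra

/-! ### Path and cycle colorings in finitely many variables -/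

section Words
open PowerSeries
variable {R : Type*} [CommRing R] {σ : Type*} [Fintype σ] [DecidableEq σ] (x : σ → R)

/-- The sum of the monomials of all words of length `n + 1` over `σ` without two equal adjacent
letters, with first letter `a` and last letter `b`. -/
def wordSum (b : σ) : ℕ → σ → R
  | 0, a => if a = b then x a else 0
  | n + 1, a => x a * (∑ c, wordSum b n c - wordSum b n a)

/-- The pairs of end letters are recorded by an arbitrary weight `f`, so that the induction can
absorb the condition on the letter put in front. -/
lemma sum_words (n : ℕ) (f : σ → σ → R) :
    ∑ κ : Fin (n + 1) → σ, (if ∀ i : Fin n, κ i.castSucc ≠ κ i.succ then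
      f (κ 0) (κ (Fin.last n)) * ∏ i, x (κ i) else 0) = ∑ a, ∑ b, f a b * wordSum x b n a := by
  induction n generalizing f with
  | zero =>
    rw [Fintype.sum_equiv (Equiv.funUnique (Fin 1) σ) _ (fun a => f a a * x a)]
    · simp [wordSum]
    · intro κ
      simp
  | succ n ih =>
    have h1 : ∀ p : σ × (Fin (n + 1) → σ),
        (if ∀ i : Fin (n + 1), (Fin.cons p.1 p.2 : Fin (n + 2) → σ) i.castSucc ≠
            (Fin.cons p.1 p.2 : Fin (n + 2) → σ) i.succ then
          f ((Fin.cons p.1 p.2 : Fin (n + 2) → σ) 0)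
            ((Fin.cons p.1 p.2 : Fin (n + 2) → σ) (Fin.last (n + 1))) *
              ∏ i, x ((Fin.cons p.1 p.2 : Fin (n + 2) → σ) i) else 0) =
        (if ∀ i : Fin n, p.2 i.castSucc ≠ p.2 i.succ then
          (fun c b => if p.1 ≠ c then f p.1 b * x p.1 else 0) (p.2 0) (p.2 (Fin.last n)) *
            ∏ i, x (p.2 i) else 0) := by
      rintro ⟨a, κ⟩
      have hf : (∀ i : Fin (n + 1), (Fin.cons a κ : Fin (n + 2) → σ) i.castSucc ≠
          (Fin.cons a κ : Fin (n + 2) → σ) i.succ) ↔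
            a ≠ κ 0 ∧ ∀ i : Fin n, κ i.castSucc ≠ κ i.succ := by
        rw [Fin.forall_fin_succ]
        simp only [Fin.castSucc_zero, Fin.cons_zero, Fin.cons_succ, ← Fin.succ_castSucc]
      simp only [hf]
      simp only [Fin.prod_univ_succ (n := n + 1), ← Fin.succ_last, Fin.cons_zero,
        Fin.cons_succ]
      by_cases h : a = κ 0
      · simp [h]
      · simp [h, mul_assoc]
    rw [← Fintype.sum_equiv (Fin.consEquiv (fun _ : Fin (n + 2) => σ)) _ _ (fun p => (h1 p).symm),
      Fintype.sum_prod_type]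
    refine Finset.sum_congr rfl fun a _ => ?_
    refine (ih fun c b => if a ≠ c then f a b * x a else 0).trans ?_
    rw [Finset.sum_comm]
    refine Finset.sum_congr rfl fun b _ => ?_
    have h2 : ∀ c, (if a ≠ c then f a b * x a else 0) * wordSum x b n c =
        f a b * x a * wordSum x b n c -
          if a = c then f a b * x a * wordSum x b n c else 0 := by
      intro c
      by_cases h : a = c <;> simp [h]
    simp only [h2, Finset.sum_sub_distrib, Finset.sum_ite_eq, Finset.mem_univ, if_true, wordSum,
      ← Finset.mul_sum]
    ring

open Classical in
/-- The chromatic symmetric polynomial of a graph on `Fin n`, evaluated at the finitely many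
values `x`. -/
noncomputable def csfFin {n : ℕ} (G : SimpleGraph (Fin n)) : R :=
  ∑ κ : Fin n → σ, if ∀ v w, G.Adj v w → κ v ≠ κ w then ∏ i, x (κ i) else 0

lemma pathG_proper {τ : Type*} {n : ℕ} (κ : Fin (n + 1) → τ) :
    (∀ v w, (pathG (n + 1)).Adj v w → κ v ≠ κ w) ↔ ∀ i : Fin n, κ i.castSucc ≠ κ i.succ := by
  simp only [pathG, SimpleGraph.fromRel_adj]
  constructor
  · intro h i
    exact h _ _ ⟨by simp [Fin.ext_iff], Or.inl (by simp)⟩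
  · have key : (∀ i : Fin n, κ i.castSucc ≠ κ i.succ) →
        ∀ v w : Fin (n + 1), (v : ℕ) + 1 = w → κ v ≠ κ w := by
      intro h v w hvw
      have e2 : (⟨v, by omega⟩ : Fin n).succ = w := Fin.ext hvw
      have := h ⟨v, by omega⟩
      rwa [e2] at this
    rintro h v w ⟨-, h1 | h1⟩
    · exact key h v w h1
    · exact (key h w v h1).symm

lemma cycleG_proper {τ : Type*} {n : ℕ} (κ : Fin (n + 2) → τ) :
    (∀ v w, (cycleG (n + 2)).Adj v w → κ v ≠ κ w) ↔
      (∀ i : Fin (n + 1), κ i.castSucc ≠ κ i.succ) ∧ κ 0 ≠ κ (Fin.last (n + 1)) := by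
  rw [← pathG_proper]
  simp only [pathG, cycleG, SimpleGraph.fromRel_adj]
  constructor
  · intro h
    refine ⟨fun v w hvw => h v w ⟨hvw.1, by tauto⟩, h _ _ ⟨?_, Or.inl (Or.inr (by simp))⟩⟩
    simp [Fin.ext_iff]
  · rintro ⟨h1, h2⟩ v w ⟨hne, h⟩
    have key : ∀ v w : Fin (n + 2), (v : ℕ) = 0 ∧ (w : ℕ) = n + 2 - 1 → κ v ≠ κ w := by
      rintro v w ⟨hv, hw⟩
      have e1 : v = 0 := Fin.ext hv
      have e2 : w = Fin.last (n + 1) := Fin.ext (by simp [hw])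
      rwa [e1, e2]
    rcases h with (h | h) | (h | h)
    · exact h1 v w ⟨hne, Or.inl h⟩
    · exact key v w h
    · exact h1 v w ⟨hne, Or.inr h⟩
    · exact (key w v h).symm

lemma csfFin_path_zero : csfFin x (pathG 0) = 1 := by
  simp [csfFin]

lemma csfFin_path_succ (n : ℕ) :
    csfFin x (pathG (n + 1)) = ∑ b, ∑ a, wordSum x b n a := by
  have := sum_words x n (fun _ _ => 1)
  simp only [one_mul] at this
  rw [Finset.sum_comm, ← this, csfFin]
  refine Finset.sum_congr rfl fun κ _ => ?_
  simp only [pathG_proper]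

lemma csfFin_cycle (n : ℕ) :
    csfFin x (cycleG (n + 2)) =
      ∑ b, (∑ a, wordSum x b (n + 1) a - wordSum x b (n + 1) b) := by
  have := sum_words x (n + 1) (fun a b => if a = b then 0 else 1)
  have h2 : ∀ b, (∑ a, wordSum x b (n + 1) a - wordSum x b (n + 1) b) =
      ∑ a, (if a = b then 0 else 1) * wordSum x b (n + 1) a := by
    intro b
    have : ∀ a, (if a = b then 0 else 1) * wordSum x b (n + 1) a = wordSum x b (n + 1) a -
        if a = b then wordSum x b (n + 1) a else 0 := by
      intro a
      by_cases h : a = b <;> simp [h]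
    simp [this]
  simp only [h2]
  rw [Finset.sum_comm, ← this, csfFin]
  refine Finset.sum_congr rfl fun κ _ => ?_
  simp only [cycleG_proper]
  by_cases h1 : κ 0 = κ (Fin.last (n + 1)) <;> simp [h1]

/-- The elementary symmetric polynomial evaluated at `x`. -/
def esymFin (k : ℕ) : R := ∑ S ∈ Finset.powersetCard k Finset.univ, ∏ i ∈ S, x i

/-- The series `Σ_n z^n Σ_w x_w` over the words `w` of length `n ≥ 1` from `a` to `b` without equal
adjacent letters. -/
noncomputable def wordSer (b a : σ) : PowerSeries R := X * PowerSeries.mk fun n => wordSum x b n a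

lemma wordSer_eq (b a : σ) :
    wordSer x b a = C (x a) * X * ((if a = b then 1 else 0) +
      (∑ c, wordSer x b c - wordSer x b a)) := by
  rw [wordSer, mul_comm (C (x a)) X, mul_assoc]
  congr 1
  ext n
  rw [PowerSeries.coeff_C_mul]
  cases n with
  | zero => simp [wordSer, wordSum]
  | succ n =>
    have h0 : coeff (n + 1) (if a = b then 1 else 0 : PowerSeries R) = 0 := by
      by_cases h : a = b <;> simp [h, PowerSeries.coeff_one]
    simp [wordSer, wordSum, PowerSeries.coeff_succ_X_mul, h0]

lemma mk_esymFin : PowerSeries.mk (esymFin x) = ∏ b, (1 + C (x b) * X) := by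
  rw [Finset.prod_one_add]
  ext n
  have : ∀ S : Finset σ, coeff n (∏ b ∈ S, (C (x b) * X : PowerSeries R)) =
      if S.card = n then ∏ b ∈ S, x b else 0 := by
    intro S
    rw [Finset.prod_mul_distrib, Finset.prod_const, ← map_prod, PowerSeries.coeff_C_mul,
      PowerSeries.coeff_X_pow]
    simp [eq_comm]
  rw [map_sum, coeff_mk, esymFin, Finset.powersetCard_eq_filter, Finset.sum_filter]
  exact Finset.sum_congr rfl fun S _ => (this S).symm

/-- The chromatic symmetric polynomial of `C_n` for `n ≥ 2`, and `0` for `n ≤ 1`; closed words of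
length `1` have equal ends, so `0` is the value that fits the generating function. -/
noncomputable def cycCoeff (n : ℕ) : R := if n ≤ 1 then 0 else csfFin x (cycleG n)

lemma mk_path : PowerSeries.mk (fun n => csfFin x (pathG n)) = 1 + ∑ b, ∑ a, wordSer x b a := by
  ext n
  cases n with
  | zero => simp [csfFin_path_zero, wordSer]
  | succ n =>
    simp [csfFin_path_succ, wordSer, PowerSeries.coeff_one, PowerSeries.coeff_succ_X_mul]

lemma mk_cycle :
    PowerSeries.mk (cycCoeff x) = ∑ b, (∑ a, wordSer x b a - wordSer x b b) := by
  ext n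
  rcases n with _ | _ | n
  · simp [cycCoeff, wordSer]
  · simp [cycCoeff, wordSer, wordSum, PowerSeries.coeff_succ_X_mul]
  · rw [coeff_mk, cycCoeff, if_neg (by omega), csfFin_cycle]
    simp [wordSer, PowerSeries.coeff_succ_X_mul]

lemma one_sub_serF (e : ℕ → R) (he : e 0 = 1) :
    1 - serF e = PowerSeries.mk e - X * d⁄dX R (PowerSeries.mk e) := by
  ext n
  cases n with
  | zero => simp [serF, he]
  | succ n =>
    rw [map_sub, map_sub, PowerSeries.coeff_succ_X_mul, PowerSeries.coeff_derivative]
    simp [serF, PowerSeries.coeff_one]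
    ring

lemma mk_second (e : ℕ → R) :
    PowerSeries.mk (fun k => (k : R) * ((k - 1 : ℕ) : R) * e k) =
      X * (X * d⁄dX R (d⁄dX R (PowerSeries.mk e))) := by
  ext n
  rcases n with _ | _ | n
  · simp
  · rw [PowerSeries.coeff_succ_X_mul]; simp
  · rw [PowerSeries.coeff_succ_X_mul, PowerSeries.coeff_succ_X_mul, PowerSeries.coeff_derivative,
      PowerSeries.coeff_derivative]
    simp
    ring

lemma derivative_prod_one_add (v : σ → PowerSeries R)
    (hv : ∀ b, (1 + C (x b) * X) * v b = 1) (s : Finset σ) :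
    d⁄dX R (∏ b ∈ s, (1 + C (x b) * X)) =
      (∏ b ∈ s, (1 + C (x b) * X)) * ∑ b ∈ s, C (x b) * v b := by
  induction s using Finset.induction_on with
  | empty => simp
  | insert a s ha ih =>
    rw [Finset.prod_insert ha, Finset.sum_insert ha, Derivation.leibniz, ih]
    simp only [map_add, PowerSeries.derivative_one, Derivation.leibniz, PowerSeries.derivative_C,
      PowerSeries.derivative_X, smul_eq_mul]
    linear_combination (-(∏ b ∈ s, (1 + C (x b) * X)) * C (x a)) * hv a

/-- With `E = ∏_b (1 + x_b z)`, `t_b = x_b z / (1 + x_b z)` and `T = Σ_b t_b`, the series `g_b` of words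
ending in `b` satisfies `(1 - T) g_b = t_b`, while `z E' = E T` and
`z² E'' = E (T² - Σ_b t_b²)`. -/
lemma path_cycle_series :
    (1 - serF (esymFin x)) * PowerSeries.mk (fun n => csfFin x (pathG n)) =
        PowerSeries.mk (esymFin x) ∧
      (1 - serF (esymFin x)) * PowerSeries.mk (cycCoeff x) =
        PowerSeries.mk fun k => (k : R) * ((k - 1 : ℕ) : R) * esymFin x k := by
  have he0 : esymFin x 0 = 1 := by simp [esymFin]
  -- `v b` is the inverse of `1 + x_b z`; then `T = z D` for `D = Σ_b x_b v_b` below.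
  have hv : ∀ b, ∃ v : PowerSeries R, (1 + C (x b) * X) * v = 1 := fun b =>
    ⟨_, PowerSeries.mul_invOfUnit _ 1 (by simp)⟩
  choose v hv using hv
  have hdv : ∀ b, d⁄dX R (v b) = -(C (x b) * v b ^ 2) := by
    intro b
    have h := congrArg (d⁄dX R) (hv b)
    simp only [map_add, PowerSeries.derivative_one, Derivation.leibniz, PowerSeries.derivative_C,
      PowerSeries.derivative_X, smul_eq_mul] at h
    linear_combination (v b) * h - (d⁄dX R (v b)) * hv b
  set E : PowerSeries R := PowerSeries.mk (esymFin x) with hE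
  obtain ⟨D, hD⟩ : ∃ D : PowerSeries R, D = ∑ b, C (x b) * v b := ⟨_, rfl⟩
  have hdE : d⁄dX R E = E * D := by
    rw [hE, hD, mk_esymFin, derivative_prod_one_add x v hv]
  have hdD : d⁄dX R D = -∑ b, (C (x b) * v b) ^ 2 := by
    rw [hD, map_sum, ← Finset.sum_neg_distrib]
    refine Finset.sum_congr rfl fun b _ => ?_
    simp only [Derivation.leibniz, PowerSeries.derivative_C, smul_eq_mul, hdv]
    ring
  have hddE : d⁄dX R (d⁄dX R E) = E * (D ^ 2 - ∑ b, (C (x b) * v b) ^ 2) := by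
    rw [hdE, Derivation.leibniz, hdE, hdD]
    simp only [smul_eq_mul]
    ring
  have hG : ∀ b a, wordSer x b a = X * (C (x a) * v a) *
      ((if a = b then 1 else 0) + ∑ c, wordSer x b c) := by
    intro b a
    linear_combination (v a) * wordSer_eq x b a - (wordSer x b a) * hv a
  have hg : ∀ b, (1 - X * D) * ∑ a, wordSer x b a = X * (C (x b) * v b) := by
    intro b
    have h : ∑ a, wordSer x b a = X * (C (x b) * v b) + X * D * ∑ c, wordSer x b c := by
      conv_lhs => rw [Finset.sum_congr rfl fun a _ => hG b a]
      simp only [mul_add, Finset.sum_add_distrib, ← Finset.sum_mul, ← Finset.mul_sum]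
      simp [hD]
    linear_combination h
  rw [one_sub_serF _ he0, mk_second, mk_path, mk_cycle, ← hE, hddE, hdE]
  have hfac : E - X * (E * D) = E * (1 - X * D) := by ring
  rw [hfac]
  constructor
  · rw [mul_assoc, mul_add, Finset.mul_sum, Finset.sum_congr rfl fun b _ => hg b,
      ← Finset.mul_sum, ← hD]
    ring
  · have h : ∀ b, (1 - X * D) * (∑ a, wordSer x b a - wordSer x b b) =
        X * (X * (D * (C (x b) * v b) - (C (x b) * v b) ^ 2)) := by
      intro b
      rw [hG b b, if_pos rfl]
      linear_combination (1 - X * (C (x b) * v b)) * hg b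
    rw [mul_assoc, Finset.mul_sum, Finset.sum_congr rfl fun b _ => h b, ← Finset.mul_sum,
      ← Finset.mul_sum, Finset.sum_sub_distrib, ← Finset.mul_sum, ← hD]
    ring

end Words

/-! ### Passing from infinitely many to finitely many variables -/

section Truncation

/-- Setting `x_i = 0` for all `i ≥ N`. -/
noncomputable def truncHom (N : ℕ) : SymF →+* MvPowerSeries (Fin N) ℚ :=
  (MvPowerSeries.killCompl (R := ℚ) (Fin.valEmbedding : Fin N ↪ ℕ)).toRingHom

lemma coeff_truncHom (N : ℕ) (f : SymF) (d : Fin N →₀ ℕ) :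
    MvPowerSeries.coeff d (truncHom N f) = f (d.embDomain Fin.valEmbedding) :=
  MvPowerSeries.coeff_killCompl ..

lemma embDomain_val {N : ℕ} (d : Fin N →₀ ℕ) (i : Fin N) :
    d.embDomain (Fin.valEmbedding : Fin N ↪ ℕ) (i : ℕ) = d i :=
  Finsupp.embDomain_apply_self (Fin.valEmbedding : Fin N ↪ ℕ) d i

lemma truncHom_jointly_injective {f g : SymF} (h : ∀ N, truncHom N f = truncHom N g) :
    f = g := by
  funext d
  have hN : ∀ i ∈ d.support, i < d.support.sup id + 1 := fun i hi =>
    Nat.lt_succ_of_le (Finset.le_sup (f := id) hi)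
  have hd : (d.comapDomain (Fin.valEmbedding : Fin (d.support.sup id + 1) ↪ ℕ)
      Fin.valEmbedding.injective.injOn).embDomain Fin.valEmbedding = d := by
    apply Finsupp.embDomain_comapDomain
    intro i hi
    exact ⟨⟨i, hN i hi⟩, rfl⟩
  have := congrArg (MvPowerSeries.coeff (d.comapDomain _ Fin.valEmbedding.injective.injOn))
    (h (d.support.sup id + 1))
  rwa [coeff_truncHom, coeff_truncHom, hd] at this

lemma coeff_prod_X {ι τ : Type*} [Fintype τ] [DecidableEq τ] (s : Finset ι) (κ : ι → τ) (d : τ →₀ ℕ) :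
    MvPowerSeries.coeff d (∏ i ∈ s, (MvPowerSeries.X (κ i) : MvPowerSeries τ ℚ)) =
      if ∀ t, (s.filter fun i => κ i = t).card = d t then 1 else 0 := by
  have h : ∏ i ∈ s, (MvPowerSeries.X (κ i) : MvPowerSeries τ ℚ) =
      MvPowerSeries.monomial (∑ i ∈ s, Finsupp.single (κ i) 1) 1 := by
    classical
    induction s using Finset.induction_on with
    | empty => simp
    | insert a s ha ih =>
      rw [Finset.prod_insert ha, Finset.sum_insert ha, ih, MvPowerSeries.X,
        MvPowerSeries.monomial_mul_monomial, one_mul]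
  rw [h, MvPowerSeries.coeff_monomial]
  congr 1
  rw [eq_comm, Finsupp.ext_iff]
  simp only [Finsupp.finsetSum_apply, Finsupp.single_apply, Finset.card_filter]
  exact propext (forall_congr' fun t => eq_comm)

lemma truncHom_esymm (N k : ℕ) :
    truncHom N (esymm k) = esymFin (fun i : Fin N => MvPowerSeries.X i) k := by
  ext d
  rw [coeff_truncHom, esymFin, map_sum]
  rw [Finset.sum_congr rfl fun S _ => coeff_prod_X S (fun i => i) d]
  simp only [Finset.filter_eq', esymm]
  have hle : (∀ i, d.embDomain (Fin.valEmbedding : Fin N ↪ ℕ) i ≤ 1) ↔ ∀ i, d i ≤ 1 := by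
    constructor
    · intro h i
      exact (embDomain_val d i).symm.trans_le (h i)
    · intro h i
      by_cases hi : i ∈ Set.range (Fin.valEmbedding : Fin N ↪ ℕ)
      · obtain ⟨j, rfl⟩ := hi
        exact (embDomain_val d j).trans_le (h j)
      · rw [Finsupp.embDomain_of_notMem_range _ _ _ hi]; omega
  have hsum : ((d.embDomain (Fin.valEmbedding : Fin N ↪ ℕ)).sum fun _ e => e) =
      d.sum fun _ e => e := by
    simp [Finsupp.sum, Finsupp.support_embDomain, embDomain_val]
  have hS : ∀ S : Finset (Fin N),
      (∀ t, (if t ∈ S then ({t} : Finset (Fin N)) else ∅).card = d t) ↔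
        (∀ i, d i ≤ 1) ∧ S = d.support := by
    intro S
    constructor
    · intro h
      constructor
      · intro i
        rw [← h i]
        split_ifs <;> simp
      · ext i
        rw [Finsupp.mem_support_iff, ← h i]
        split_ifs with hi <;> simp [hi]
    · rintro ⟨h, rfl⟩ t
      have := h t
      by_cases ht : d t = 0
      · simp [ht]
      · simp [ht]; omega
  rw [hsum, hle]
  simp only [hS]
  by_cases h1 : ∀ i, d i ≤ 1
  · have hcard : (d.sum fun _ e => e) = d.support.card := by
      rw [Finsupp.sum, Finset.card_eq_sum_ones]
      refine Finset.sum_congr rfl fun i hi => ?_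
      have := h1 i
      have := Finsupp.mem_support_iff.1 hi
      omega
    simp [h1, hcard]
  · simp [h1]

/-- The colorings counted by a coefficient at an exponent vector supported below `N` use only colors
below `N`. -/
lemma truncHom_csf (N n : ℕ) (G : SimpleGraph (Fin n)) :
    truncHom N (csf G) = csfFin (fun i : Fin N => MvPowerSeries.X i) G := by
  classical
  ext d
  rw [coeff_truncHom, csfFin, map_sum]
  have h1 : ∀ κ : Fin n → Fin N, MvPowerSeries.coeff d
      (if ∀ v w, G.Adj v w → κ v ≠ κ w then
        ∏ i, (MvPowerSeries.X (κ i) : MvPowerSeries (Fin N) ℚ) else 0) =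
      if (∀ v w, G.Adj v w → κ v ≠ κ w) ∧
        ∀ t, (Finset.univ.filter fun i => κ i = t).card = d t then 1 else 0 := by
    intro κ
    by_cases h : ∀ v w, G.Adj v w → κ v ≠ κ w
    · rw [if_pos h, coeff_prod_X]
      by_cases h2 : ∀ t, (Finset.univ.filter fun i => κ i = t).card = d t
      · rw [if_pos h2, if_pos ⟨h, h2⟩]
      · rw [if_neg h2, if_neg fun h' => h2 h'.2]
    · rw [if_neg h, if_neg (fun h' => h h'.1), map_zero]
  simp only [h1]
  rw [Finset.sum_boole]
  simp only [csf]
  congr 1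
  rw [← Set.ncard_coe_finset, ← Set.ncard_image_of_injective (f := fun κ : Fin n → Fin N =>
    fun v => (κ v : ℕ)) _ (fun κ κ' h => by
      funext v
      exact Fin.ext (congrFun h v))]
  congr 1
  ext κ
  simp only [Set.mem_ofPred_eq, Set.mem_image, Finset.coe_filter, Finset.mem_univ, true_and]
  have hfib : ∀ (κ' : Fin n → Fin N) (t : Fin N),
      {v | (κ' v : ℕ) = (t : ℕ)}.ncard = (Finset.univ.filter fun i => κ' i = t).card := by
    intro κ' t
    rw [← Set.ncard_coe_finset]
    congr 1
    ext v
    simp [Fin.ext_iff]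
  constructor
  · rintro ⟨hprop, hf⟩
    have hlt : ∀ v, κ v < N := by
      intro v
      by_contra hv
      have h0 := hf (κ v)
      rw [Finsupp.embDomain_of_notMem_range _ _ _ (by
        rintro ⟨j, hj⟩
        have : (j : ℕ) = κ v := hj
        omega), Set.ncard_eq_zero] at h0
      exact (Set.eq_empty_iff_forall_notMem.1 h0 v) rfl
    refine ⟨fun v => ⟨κ v, hlt v⟩, ⟨fun v w hvw h => hprop v w hvw (congrArg Fin.val h), ?_⟩, rfl⟩
    intro t
    rw [← hfib, hf]
    exact embDomain_val d t
  · rintro ⟨κ', ⟨hprop, hf⟩, rfl⟩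
    refine ⟨fun v w hvw h => hprop v w hvw (Fin.ext h), ?_⟩
    intro i
    by_cases hi : i < N
    · have := hf ⟨i, hi⟩
      rw [← hfib] at this
      rw [this]
      exact (embDomain_val d ⟨i, hi⟩).symm
    · rw [Finsupp.embDomain_of_notMem_range _ _ _ (by
        rintro ⟨j, hj⟩
        have : (j : ℕ) = i := hj
        omega), Set.ncard_eq_zero]
      ext v
      simp only [Set.mem_ofPred_eq, Set.mem_empty_iff_false, iff_false]
      omega

lemma map_one_sub_serF {R S : Type*} [CommRing R] [CommRing S] (T : R →+* S) (e : ℕ → R) :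
    PowerSeries.map T (1 - serF e) = 1 - serF (fun k => T (e k)) := by
  rw [map_sub, map_one]
  congr 1
  ext k
  simp [serF]

/-- `X_{C_n}` for `n ≥ 2`, and `0` for `n ≤ 1`. -/
noncomputable def cycSym (n : ℕ) : SymF := if n ≤ 1 then 0 else csf (cycleG n)

lemma powerSeries_ext_truncHom {A B : PowerSeries SymF}
    (h : ∀ N, PowerSeries.map (truncHom N) A = PowerSeries.map (truncHom N) B) : A = B := by
  ext1 k
  refine truncHom_jointly_injective fun N => ?_
  rw [← PowerSeries.coeff_map, h, PowerSeries.coeff_map]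

lemma path_series :
    (1 - serF esymm) * PowerSeries.mk (fun n => csf (pathG n)) = PowerSeries.mk esymm := by
  refine powerSeries_ext_truncHom fun N => ?_
  have h := (path_cycle_series (fun i : Fin N => (MvPowerSeries.X i : MvPowerSeries _ ℚ))).1
  rw [map_mul, map_one_sub_serF]
  simp only [truncHom_esymm]
  convert h using 2
  · ext1 k; simp [truncHom_csf]
  · ext1 k; simp [truncHom_esymm]

lemma cycle_series :
    (1 - serF esymm) * PowerSeries.mk cycSym =
      PowerSeries.mk fun k => (k : SymF) * ((k - 1 : ℕ) : SymF) * esymm k := by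
  refine powerSeries_ext_truncHom fun N => ?_
  have h := (path_cycle_series (fun i : Fin N => (MvPowerSeries.X i : MvPowerSeries _ ℚ))).2
  rw [map_mul, map_one_sub_serF]
  simp only [truncHom_esymm]
  convert h using 2
  · ext1 k
    rw [PowerSeries.coeff_map, PowerSeries.coeff_mk, PowerSeries.coeff_mk, cycSym, cycCoeff]
    split_ifs
    · simp
    · rw [truncHom_csf]
  · ext1 k; simp [truncHom_esymm]

lemma esymm_zero : esymm 0 = 1 := by
  refine truncHom_jointly_injective fun N => ?_
  rw [truncHom_esymm, map_one]
  simp [esymFin]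

end Truncation

/-- For `2 ≤ m ≤ n - 1`,
`Σ_{i=2}^{m} X_{C_i} X_{P_{n-i}} = Σ_{I ⊨ n} σ_{Ī}^-(m) w_I e_I`. -/
theorem stmt_5 (n m : ℕ) (hm : 2 ≤ m) (hmn : m + 1 ≤ n) :
    ∑ i ∈ Finset.Icc 2 m, csf (cycleG i) * csf (pathG (n - i)) =
      ∑ I : Composition n,
        ((sigmaMinus I.blocks.reverse m * wC I.blocks : ℕ) : ℚ) •
          esymmProd I.blocks := by
  have h := sum_sigma_wC esymm (fun k => csf (pathG k)) cycSym esymm_zero path_series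
    cycle_series (n := n) (m := m) hmn
  have hL : ∑ i ∈ Finset.Icc 2 m, csf (cycleG i) * csf (pathG (n - i)) =
      ∑ j ∈ Finset.range (m + 1), cycSym j * csf (pathG (n - j)) := by
    refine Finset.sum_subset_zero_on_sdiff (fun i hi => ?_) (fun i hi => ?_) (fun i hi => ?_)
    · simp at hi ⊢; omega
    · have : i ≤ 1 := by simp at hi; omega
      simp [cycSym, this]
    · have : ¬ i ≤ 1 := by simp at hi; omega
      simp [cycSym, this]
  rw [hL, ← h]
  refine Finset.sum_congr rfl fun I _ => ?_
  rw [Nat.cast_smul_eq_nsmul, nsmul_eq_mul, esymmProd]
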